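/- Let s be a level-2 stack with |s| ≥ 2 and let q,q' be states of a level-2 collapsible pushdown system. There is a return from (q,s) to (q',Pop₂(s)) if and only if (q,q') ∈ ExRet(TOP₂(s)). -/

import Mathlib

namespace CPG

/-! ## Level-2 collapsible pushdown stacks -/

/-- Stack letters: `Sum.inl σ` is a letter with a level-1 link,
`Sum.inr (σ, k)` is a letter with a level-2 link to the substack of width `k`. -/
abbrev Letter (A : Type) := A ⊕ (A × ℕ)

def symOf {A : Type} : Letter A → A
  | Sum.inl a => a
  | Sum.inr (a, _) => a

def lvlOf {A : Type} : Letter A → ℕ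
  | Sum.inl _ => 1
  | Sum.inr _ => 2

abbrev Word (A : Type) := List (Letter A)

/-- A 2-word: a list of words; the last word is the topmost one. -/
abbrev Stack2 (A : Type) := List (Word A)

/-- The initial level-2 stack `⊥₂`. -/
def bottom2 {A : Type} (bot : A) : Stack2 A := [[Sum.inl bot]]

def top2 {A : Type} (s : Stack2 A) : Option (Word A) := s.getLast?

def top1 {A : Type} (s : Stack2 A) : Option (Letter A) := s.getLast?.bind List.getLast?

def symS {A : Type} (s : Stack2 A) : Option A := (top1 s).map symOf

def lvlS {A : Type} (s : Stack2 A) : Option ℕ := (top1 s).map lvlOf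

def lnkS {A : Type} (s : Stack2 A) : Option ℕ :=
  match top1 s, top2 s with
  | some (Sum.inr (_, j)), _ => some j
  | some (Sum.inl _), some w => some (w.length - 1)
  | _, _ => none

def clone2 {A : Type} (s : Stack2 A) : Option (Stack2 A) :=
  (top2 s).map fun w => s ++ [w]

def push1 {A : Type} [DecidableEq A] (bot a : A) (s : Stack2 A) : Option (Stack2 A) :=
  if a = bot then none else (top2 s).map fun w => s.dropLast ++ [w ++ [Sum.inl a]]

def push2 {A : Type} [DecidableEq A] (bot a : A) (s : Stack2 A) : Option (Stack2 A) :=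
  if a = bot then none else
    (top2 s).map fun w => s.dropLast ++ [w ++ [Sum.inr (a, s.length - 1)]]

def pop2 {A : Type} (s : Stack2 A) : Option (Stack2 A) :=
  if 1 < s.length then some s.dropLast else none

def pop1 {A : Type} (s : Stack2 A) : Option (Stack2 A) :=
  match s.getLast? with
  | some w => if 1 < w.length then some (s.dropLast ++ [w.dropLast]) else none
  | none => none

def collapse {A : Type} (s : Stack2 A) : Option (Stack2 A) :=
  match top1 s with
  | some (Sum.inr (_, k)) => if 0 < k then some (s.take k) else none
  | some (Sum.inl _) => pop1 s
  | none => none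

/-- The level-2 stack operations. -/
inductive Op (A : Type) where
  | clone2 | pop1 | pop2 | collapse
  | push1 (a : A) | push2 (a : A)

def applyOp {A : Type} [DecidableEq A] (bot : A) : Op A → Stack2 A → Option (Stack2 A)
  | .clone2 => clone2
  | .pop1 => pop1
  | .pop2 => pop2
  | .collapse => collapse
  | .push1 a => push1 bot a
  | .push2 a => push2 bot a

/-- `Stacks(Σ)` : the smallest set containing `⊥₂` and closed under the operations. -/
inductive IsStack {A : Type} [DecidableEq A] (bot : A) : Stack2 A → Prop where
  | base : IsStack bot (bottom2 bot)
  | step {s t : Stack2 A} (op : Op A) : IsStack bot s → applyOp bot op s = some t →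
      IsStack bot t

/-- Iterated application of a partial stack operation. -/
def iter {A : Type} (f : Stack2 A → Option (Stack2 A)) : ℕ → Stack2 A → Option (Stack2 A)
  | 0, s => some s
  | n + 1, s => (f s).bind (iter f n)

/-- `t` is a substack of `s`: `t = Pop₁ⁿ(Pop₂ᵐ(s))`. -/
def Substack {A : Type} (t s : Stack2 A) : Prop :=
  ∃ n m, (iter pop2 m s).bind (iter pop1 n) = some t

def ProperSubstack {A : Type} (t s : Stack2 A) : Prop := Substack t s ∧ t ≠ s

/-- `s` is a prefix of `t` (`s ⊑ t`). -/
def StackPrefix {A : Type} (s t : Stack2 A) : Prop :=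
  s ≠ [] ∧ s.length ≤ t.length ∧ s.dropLast <+: t ∧
    ∀ j, s.length - 1 ≤ j → j < t.length → s.getLastD [] <+: t.getD j []

/-- `t[s/u]` : the stack obtained from `t` by replacing the prefix `s` by `u`. -/
def substPrefix {A : Type} (t s u : Stack2 A) : Stack2 A :=
  u.dropLast ++
    (t.drop (s.length - 1)).map fun v => u.getLastD [] ++ v.drop (s.getLastD []).length

/-! ## Collapsible pushdown systems and runs -/

/-- A level-2 collapsible pushdown system. -/
structure CPS (Q A Γ : Type) where
  bot : A
  q0 : Q
  Δ : Set (Q × A × Γ × Q × Op A)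

variable {Q A Γ : Type} [DecidableEq A]

/-- A `γ`-labelled transition realized by the operation `op`. -/
def TransOp (S : CPS Q A Γ) (γ : Γ) (op : Op A) (c c' : Q × Stack2 A) : Prop :=
  ∃ σ : A, symS c.2 = some σ ∧ (c.1, σ, γ, c'.1, op) ∈ S.Δ ∧
    applyOp S.bot op c.2 = some c'.2

def Trans (S : CPS Q A Γ) (γ : Γ) (c c' : Q × Stack2 A) : Prop :=
  ∃ op, TransOp S γ op c c'

/-- A run of a collapsible pushdown system (recording configurations, labels and
operations of each step). -/
structure Run (S : CPS Q A Γ) where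
  len : ℕ
  cfg : ℕ → Q × Stack2 A
  lab : ℕ → Γ
  op : ℕ → Op A
  ok : ∀ i, i < len → TransOp S (lab i) (op i) (cfg i) (cfg (i + 1))

def Run.stk {S : CPS Q A Γ} (ρ : Run S) (i : ℕ) : Stack2 A := (ρ.cfg i).2

/-- The word of labels along a run. -/
def Run.labels {S : CPS Q A Γ} (ρ : Run S) : List Γ :=
  List.ofFn fun i : Fin ρ.len => ρ.lab i

/-- `Reach_L`-reachability: a run from `c` to `c'` labelled by a word in `L`. -/
def ReachL (S : CPS Q A Γ) (L : Language Γ) (c c' : Q × Stack2 A) : Prop :=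
  ∃ ρ : Run S, ρ.cfg 0 = c ∧ ρ.cfg ρ.len = c' ∧ ρ.labels ∈ L

/-- Plain reachability. -/
def Reach (S : CPS Q A Γ) (c c' : Q × Stack2 A) : Prop :=
  ∃ ρ : Run S, ρ.cfg 0 = c ∧ ρ.cfg ρ.len = c'

/-! ## ε-contraction -/

def oneLetterLang (γ : Γ) : Language Γ := {[γ]}

def nonEpsLang (eps : Γ) : Language Γ := {w | ∃ γ : Γ, γ ≠ eps ∧ w = [γ]}

/-- The language `{ε}*`. -/
def epsStar (eps : Γ) : Language Γ := KStar.kstar (oneLetterLang eps)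

/-- The language `({ε}*(Γ∖{ε}))*`. -/
def domLang (eps : Γ) : Language Γ :=
  KStar.kstar (epsStar eps * nonEpsLang eps)

/-- The language `{ε}*γ`. -/
def edgeLang (eps γ : Γ) : Language Γ := epsStar eps * oneLetterLang γ

/-- The vertex set of the ε-contraction `G/ε`. -/
def EpsDomain (S : CPS Q A Γ) (eps : Γ) : Set (Q × Stack2 A) :=
  {c | ReachL S (domLang eps) (S.q0, bottom2 S.bot) c}

/-! ## (Generalised) milestones and the order ≪ -/

/-- `wordAt bot s i` is the word `wᵢ` of `s`, with the convention `w₀ = ⊥`. -/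
def wordAt {A : Type} (bot : A) (s : Stack2 A) (i : ℕ) : Word A :=
  if i = 0 then [Sum.inl bot] else s.getD (i - 1) []

/-- Longest common prefix of two words. -/
def lcp {α : Type} [DecidableEq α] : List α → List α → List α
  | a :: s, b :: t => if a = b then a :: lcp s t else []
  | _, _ => []

/-- `m` is a generalised milestone of `s`. -/
def GenMilestone (bot : A) (s m : Stack2 A) : Prop :=
  ∃ i v, i < s.length ∧ m = s.take i ++ [v] ∧
    lcp (wordAt bot s i) (wordAt bot s (i + 1)) <+: v ∧
    (v <+: wordAt bot s i ∨ v <+: wordAt bot s (i + 1))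

/-- `m` is a milestone of `s`. -/
def Milestone (bot : A) (s m : Stack2 A) : Prop :=
  ∃ i v, i < s.length ∧ m = s.take i ++ [v] ∧
    lcp (wordAt bot s i) (wordAt bot s (i + 1)) <+: v ∧
    v <+: wordAt bot s (i + 1)

def genMilestones (bot : A) (s : Stack2 A) : Set (Stack2 A) := {m | GenMilestone bot s m}

def milestones (bot : A) (s : Stack2 A) : Set (Stack2 A) := {m | Milestone bot s m}

/-- The base cases of the partial order `≪`. -/
def llBase (bot : A) (s t : Stack2 A) : Prop :=
  s.length < t.length ∨
    (s ≠ [] ∧ s.length = t.length ∧ s.dropLast = t.dropLast ∧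
      ((t.getLastD [] <+: s.getLastD [] ∧ t.getLastD [] ≠ s.getLastD [] ∧
          s.getLastD [] <+: wordAt bot s (s.length - 1)) ∨
        (s.getLastD [] <+: t.getLastD [] ∧ s.getLastD [] ≠ t.getLastD [] ∧
          ¬ t.getLastD [] <+: wordAt bot s (s.length - 1))))

/-- The order `≪`: the smallest reflexive transitive relation containing `llBase`. -/
def ll (bot : A) : Stack2 A → Stack2 A → Prop := Relation.ReflTransGen (llBase bot)

/-- `m'` is the ≪-successor of `m` within `genMilestones bot s`. -/
def LlSuccessor (bot : A) (s m m' : Stack2 A) : Prop :=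
  GenMilestone bot s m ∧ GenMilestone bot s m' ∧ m ≠ m' ∧ ll bot m m' ∧
    ∀ m'', GenMilestone bot s m'' → ll bot m m'' → m'' ≠ m → ll bot m' m''

/-! ## Loops, returns and 1-loops -/

/-- The segment `[i,j]` of `ρ` is a loop (of its initial stack). -/
def LoopSeg {S : CPS Q A Γ} (ρ : Run S) (i j : ℕ) : Prop :=
  i ≤ j ∧ j ≤ ρ.len ∧ ρ.stk j = ρ.stk i ∧
    (∀ k, i ≤ k → k ≤ j → ∀ t, pop2 (ρ.stk i) = some t → ¬ Substack (ρ.stk k) t) ∧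
    (∀ k, i ≤ k → k ≤ j → ∀ m, 0 < m → ∀ t, iter pop1 m (ρ.stk i) = some t →
      ρ.stk k = t → ∀ m', m' < m → ∃ t', iter pop1 m' (ρ.stk i) = some t' ∧
        lvlS t' = some 1)

/-- A high loop: a loop that never visits `Pop₁` of its stack. -/
def HighLoopSeg {S : CPS Q A Γ} (ρ : Run S) (i j : ℕ) : Prop :=
  LoopSeg ρ i j ∧ ∀ k, i ≤ k → k ≤ j → ∀ t, pop1 (ρ.stk i) = some t → ρ.stk k ≠ t

/-- A low loop: a loop whose second and second-to-last stacks are `Pop₁` of its stack. -/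
def LowLoopSeg {S : CPS Q A Γ} (ρ : Run S) (i j : ℕ) : Prop :=
  LoopSeg ρ i j ∧ i < j ∧
    ∃ t, pop1 (ρ.stk i) = some t ∧ ρ.stk (i + 1) = t ∧ ρ.stk (j - 1) = t

/-- The common part of the definition of a return on the segment `[i,j]`:
it leads from its initial stack `t` to `Pop₂(t)` and never visits a substack
of `Pop₂(t)` before its final configuration. -/
def RetShell {S : CPS Q A Γ} (ρ : Run S) (i j : ℕ) : Prop :=
  i < j ∧ j ≤ ρ.len ∧ pop2 (ρ.stk i) = some (ρ.stk j) ∧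
    ∀ k, i ≤ k → k < j → ¬ Substack (ρ.stk k) (ρ.stk j)

/-- The segment `[i,j]` of `ρ` is a return (from its initial stack `t` to `Pop₂(t)`). -/
inductive RetSeg {S : CPS Q A Γ} (ρ : Run S) : ℕ → ℕ → Prop where
  | pop2 {i j : ℕ} (h : RetShell ρ i j) (hop : ρ.op (j - 1) = Op.pop2) : RetSeg ρ i j
  | collapse {i j : ℕ} (h : RetShell ρ i j) (hop : ρ.op (j - 1) = Op.collapse)
      (hpre : ∃ w w', top2 (ρ.stk i) = some w ∧ top2 (ρ.stk (j - 1)) = some w' ∧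
        w <+: w' ∧ w ≠ w') : RetSeg ρ i j
  | sub {i k j : ℕ} (h : RetShell ρ i j) (hik : i < k) (hkj : k ≤ j)
      (hpop : pop1 (ρ.stk i) = some (ρ.stk k)) (hret : RetSeg ρ k j) : RetSeg ρ i j

/-- The segment `[i,j]` of `ρ` is a level-1-loop. -/
def OneLoopSeg {S : CPS Q A Γ} (ρ : Run S) (i j : ℕ) : Prop :=
  i ≤ j ∧ j ≤ ρ.len ∧
    ∃ (s : Stack2 A) (w : Word A) (s' : Stack2 A),
      ρ.stk i = s ++ [w] ∧ ρ.stk j = s ++ s' ++ [w] ∧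
      (∀ k, i ≤ k → k ≤ j → s.length < (ρ.stk k).length) ∧
      (∀ k, i ≤ k → k ≤ j → 1 < w.length → top2 (ρ.stk k) = some w.dropLast →
        ∃ m, k < m ∧ m ≤ j ∧ RetSeg ρ k m)

/-! ## ExRet, ExLoop, ... -/

/-- `w↓₀` : replace every level-2 link by `0`. -/
def down0 {A : Type} : Word A → Word A :=
  List.map fun a => match a with
    | Sum.inl x => Sum.inl x
    | Sum.inr (x, _) => Sum.inr (x, 0)

def ExRet (S : CPS Q A Γ) (w : Word A) : Set (Q × Q) :=
  {p | ∃ ρ : Run S, ρ.cfg 0 = (p.1, [down0 w, down0 w]) ∧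
    ρ.cfg ρ.len = (p.2, [down0 w]) ∧ RetSeg ρ 0 ρ.len}

def ExLoop (S : CPS Q A Γ) (w : Word A) : Set (Q × Q) :=
  {p | ∃ ρ : Run S, ρ.cfg 0 = (p.1, [down0 w]) ∧ ρ.cfg ρ.len = (p.2, [down0 w]) ∧
    LoopSeg ρ 0 ρ.len}

def ExHLoop (S : CPS Q A Γ) (w : Word A) : Set (Q × Q) :=
  {p | ∃ ρ : Run S, ρ.cfg 0 = (p.1, [down0 w]) ∧ ρ.cfg ρ.len = (p.2, [down0 w]) ∧
    HighLoopSeg ρ 0 ρ.len}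

def ExLLoop (S : CPS Q A Γ) (w : Word A) : Set (Q × Q) :=
  {p | ∃ ρ : Run S, ρ.cfg 0 = (p.1, [down0 w]) ∧ ρ.cfg ρ.len = (p.2, [down0 w]) ∧
    LowLoopSeg ρ 0 ρ.len}

def ExOneLoop (S : CPS Q A Γ) (w : Word A) : Set (Q × Q) :=
  {p | ∃ (ρ : Run S) (s' : Stack2 A), ρ.cfg 0 = (p.1, [down0 w]) ∧
    ρ.cfg ρ.len = (p.2, s' ++ [down0 w]) ∧ OneLoopSeg ρ 0 ρ.len}

/-! ## Finite binary trees -/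

/-- Finite binary trees with labels in `α` and optional left/right children. -/
inductive PTree (α : Type) where
  | node (a : α) (l r : Option (PTree α)) : PTree α

/-- The label of the node at address `d` (`false` = left/0, `true` = right/1). -/
def PTree.labelAt {α : Type} : PTree α → List Bool → Option α
  | .node a _ _, [] => some a
  | .node _ (some t) _, false :: d => t.labelAt d
  | .node _ none _, false :: _ => none
  | .node _ _ (some t), true :: d => t.labelAt d
  | .node _ _ none, true :: _ => none

def PTree.map {α β : Type} (f : α → β) : PTree α → PTree β
  | .node a l r =>
    .node (f a)
      (match l with | none => none | some t => some (t.map f))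
      (match r with | none => none | some t => some (t.map f))

/-- Convolution of two trees, with `none` as padding symbol `□`. -/
def PTree.conv {α β : Type} : PTree α → PTree β → PTree (Option α × Option β)
  | .node a l r, .node b l' r' =>
    .node (some a, some b)
      (match l, l' with
        | none, none => none
        | some t, none => some (t.map fun x => (some x, none))
        | none, some u => some (u.map fun x => (none, some x))
        | some t, some u => some (PTree.conv t u))
      (match r, r' with
        | none, none => none
        | some t, none => some (t.map fun x => (some x, none))
        | none, some u => some (u.map fun x => (none, some x))
        | some t, some u => some (PTree.conv t u))

/-- A (bottom-up nondeterministic) finite tree automaton. -/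
structure TreeAut (α : Type) where
  St : Type
  fin : Finite St
  qI : St
  F : Set St
  Δ : Set (St × α × St × St)

/-- Acceptance of a finite tree by a tree automaton. -/
def TreeAut.Accepts {α : Type} (M : TreeAut α) (t : PTree α) : Prop :=
  ∃ ρ : List Bool → M.St,
    (∀ d, t.labelAt d = none → ρ d = M.qI) ∧
    (∀ d a, t.labelAt d = some a → (ρ d, a, ρ (d ++ [false]), ρ (d ++ [true])) ∈ M.Δ) ∧
    ρ [] ∈ M.F

/-- A family of binary relations on `B` is tree-automatic. -/
def IsTreeAutomatic {B : Type} {I : Type} (E : I → B → B → Prop) : Prop :=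
  ∃ (α : Type) (_ : Finite α) (AB : TreeAut α) (AE : I → TreeAut (Option α × Option α))
    (f : {t : PTree α // AB.Accepts t} → B),
    Function.Bijective f ∧
      ∀ (i : I) (t₁ t₂ : {t : PTree α // AB.Accepts t}),
        (AE i).Accepts (PTree.conv t₁.1 t₂.1) ↔ E i (f t₁) (f t₂)

/-! ## The encoding of configurations as trees -/

/-- Labels of encoding trees: a state, a pair (symbol, link level), or `ε`. -/
abbrev EncLabel (Q A : Type) := Q ⊕ ((A × ℕ) ⊕ Unit)

def epsLab {Q A : Type} : EncLabel Q A := Sum.inr (Sum.inr ())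

def symLab {Q A : Type} (τ : Letter A) : EncLabel Q A := Sum.inr (Sum.inl (symOf τ, lvlOf τ))

/-- Encoding of blocklines as trees (with a fuel parameter driving the recursion;
the fuel used in `encStack` is large enough so that it never runs out on actual
blocklines). The left subtree encodes the blockline induced by the first maximal
block, the right subtree the remaining blocks. -/
def encBL (Q : Type) {A : Type} [DecidableEq A] :
    ℕ → EncLabel Q A → List (Word A) → PTree (EncLabel Q A)
  | 0, σ, _ => .node σ none none
  | _ + 1, σ, [] => .node σ none none
  | fuel + 1, σ, w :: rest =>
    if w.length ≤ 1 then
      match rest with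
      | [] => .node σ none none
      | _ :: _ => .node σ none (some (encBL Q fuel epsLab rest))
    else
      let p : Word A → Bool := fun v => decide (v.take 2 = w.take 2)
      let blk := (w :: rest).takeWhile p
      let restBlk := (w :: rest).dropWhile p
      .node σ
        (some (encBL Q fuel
          (match w[1]? with | some τ' => symLab τ' | none => epsLab)
          (blk.map List.tail)))
        (match restBlk with
          | [] => none
          | _ :: _ => some (encBL Q fuel epsLab restBlk))

/-- The total number of letters of a 2-word. -/
def size2 {A : Type} (s : Stack2 A) : ℕ := (s.map List.length).sum

/-- The encoding `Enc(s) = Enc(s, (⊥,1))` of a stack. -/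
def encStack (Q : Type) {A : Type} [DecidableEq A] (bot : A) (s : Stack2 A) :
    PTree (EncLabel Q A) :=
  encBL Q (size2 s + 1) (Sum.inr (Sum.inl (bot, 1))) s

/-- The encoding of a configuration: the state at the root, `Enc(s)` as left subtree. -/
def Enc {Q A : Type} [DecidableEq A] (bot : A) (c : Q × Stack2 A) : PTree (EncLabel Q A) :=
  .node (Sum.inl c.1) (some (encStack Q bot c.2)) none

/-- The class `EncTrees` of encoding trees. -/
def EncTrees (Q A : Type) (bot : A) : Set (PTree (EncLabel Q A)) :=
  {T | (∃ q : Q, T.labelAt [] = some (Sum.inl q)) ∧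
    T.labelAt [true] = none ∧ T.labelAt [false] ≠ none ∧
    T.labelAt [false] = some (Sum.inr (Sum.inl (bot, 1))) ∧
    (∀ (d : List Bool) (x : EncLabel Q A),
      T.labelAt (false :: (d ++ [false])) = some x →
        ∃ (σ : A) (l : ℕ), σ ≠ bot ∧ (l = 1 ∨ l = 2) ∧ x = Sum.inr (Sum.inl (σ, l))) ∧
    (∀ (d : List Bool) (x : EncLabel Q A), T.labelAt (d ++ [true]) = some x → x = epsLab) ∧
    (∀ (d : List Bool) (σ : A), ¬ (T.labelAt (d ++ [false]) = some (Sum.inr (Sum.inl (σ, 1))) ∧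
      T.labelAt (d ++ [true, false]) = some (Sum.inr (Sum.inl (σ, 1)))))}

/-- Restriction of a tree to the nodes lexicographically ≤ `d`. -/
def restrictLex {α : Type} : PTree α → List Bool → PTree α
  | .node a _ _, [] => .node a none none
  | .node a l _, false :: d =>
      .node a (match l with | none => none | some t => some (restrictLex t d)) none
  | .node a l r, true :: d =>
      .node a l (match r with | none => none | some t => some (restrictLex t d))

/-- The lexicographic order on tree addresses. -/
def lexLe (d e : List Bool) : Prop :=
  d <+: e ∨ ∃ (c x y : List Bool), d = c ++ false :: x ∧ e = c ++ true :: y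

/-! ## Deterministic finite automata with output (Moore machines) -/

structure Moore (α ω : Type) where
  St : Type
  fin : Finite St
  init : St
  step : St → α → St
  out : St → ω

def Moore.output {α ω : Type} (M : Moore α ω) (w : List α) : ω :=
  M.out (w.foldl M.step M.init)

/-!
A return only inspects the words above its target `u`, and apart from the symbols it depends only
on the links it collapses. A link present in the initial topmost word is never collapsed: it leads
to a substack of `u`, which may not be visited before the end, and at the end the definition of a
return demands that the collapsed letter was pushed during the run. All other links point to the
same place relative to the width of `u`. So the same operations can be performed over any other
target `u'`, from any topmost word which agrees with the given one up to its links into `u`.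

That the simulating run is again a return follows from a description of returns by lengths alone: a
run satisfying the shell condition and ending in a collapse is a return iff some earlier
stack `u ++ [x]` has `x` shorter than the topmost word before the collapse.
-/

section Stacks

omit [DecidableEq A]

theorem ne_concat_of_isPrefix {α : Type} {u s : List α} (h : u <+: s) (v : α) : u ≠ s ++ [v] := by
  rintro rfl
  simpa using h.length_le

/-! ### Stack operations and substacks -/

theorem clone2_eq_some_iff {s t : Stack2 A} :
    clone2 s = some t ↔ ∃ s₀ v, s = s₀ ++ [v] ∧ t = s₀ ++ [v] ++ [v] := by
  rcases s.eq_nil_or_concat' with rfl | ⟨s₀, v, rfl⟩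
  · simp [clone2, top2]
  · simp [clone2, top2, eq_comm]

theorem pop2_eq_some_iff {s t : Stack2 A} :
    pop2 s = some t ↔ t ≠ [] ∧ ∃ v, s = t ++ [v] := by
  rcases s.eq_nil_or_concat' with rfl | ⟨s₀, v, rfl⟩
  · simp [pop2]
  · have hpop : pop2 (s₀ ++ [v]) = some t ↔ s₀ ≠ [] ∧ s₀ = t := by
      simp [pop2, List.length_pos_iff]
    rw [hpop]
    refine ⟨fun ⟨hne, h⟩ => ⟨h ▸ hne, v, by rw [h]⟩, fun ⟨hne, v', h⟩ => ?_⟩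
    obtain ⟨rfl, -⟩ : s₀ = t ∧ v = v' := by simpa using h
    exact ⟨hne, rfl⟩

theorem pop1_eq_some_iff {s t : Stack2 A} :
    pop1 s = some t ↔ ∃ s₀ v a, s = s₀ ++ [v ++ [a]] ∧ v ≠ [] ∧ t = s₀ ++ [v] := by
  rcases s.eq_nil_or_concat' with rfl | ⟨s₀, w, rfl⟩
  · simp [pop1]
  · rcases w.eq_nil_or_concat' with rfl | ⟨v, a, rfl⟩
    · simp [pop1]
    · simp [pop1, List.length_pos_iff, eq_comm]

theorem collapse_eq_some_iff {s t : Stack2 A} :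
    collapse s = some t ↔ ∃ s₀ v a, s = s₀ ++ [v ++ [a]] ∧
      ((∃ x, a = Sum.inl x) ∧ v ≠ [] ∧ t = s₀ ++ [v] ∨
        ∃ x k, a = Sum.inr (x, k) ∧ 0 < k ∧ t = s.take k) := by
  rcases s.eq_nil_or_concat' with rfl | ⟨s₀, w, rfl⟩
  · simp [collapse, top1]
  · rcases w.eq_nil_or_concat' with rfl | ⟨v, x | ⟨x, k⟩, rfl⟩
    · simp [collapse, top1]
    · simp [collapse, top1, pop1, List.length_pos_iff, eq_comm]
    · simp [collapse, top1, eq_comm]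

theorem length_le_of_iter {f : Stack2 A → Option (Stack2 A)}
    (hf : ∀ s t, f s = some t → t.length ≤ s.length) {n : ℕ} {s t : Stack2 A}
    (h : iter f n s = some t) : t.length ≤ s.length := by
  induction n generalizing s with
  | zero => simp_all [iter]
  | succ n ih =>
    obtain ⟨r, hr, hrt⟩ := Option.bind_eq_some_iff.1 h
    exact (ih hrt).trans (hf _ _ hr)

theorem Substack.length_le {s t : Stack2 A} (h : Substack t s) : t.length ≤ s.length := by
  obtain ⟨n, m, h⟩ := h
  obtain ⟨r, hr, hrt⟩ := Option.bind_eq_some_iff.1 h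
  have hpop1 : ∀ s t : Stack2 A, pop1 s = some t → t.length ≤ s.length := fun s t h => by
    obtain ⟨s₀, v, a, rfl, -, rfl⟩ := pop1_eq_some_iff.1 h
    simp
  have hpop2 : ∀ s t : Stack2 A, pop2 s = some t → t.length ≤ s.length := fun s t h => by
    obtain ⟨-, v, rfl⟩ := pop2_eq_some_iff.1 h
    simp
  exact (length_le_of_iter hpop1 hrt).trans (length_le_of_iter hpop2 hr)

theorem Substack.of_isPrefix {s t : Stack2 A} (ht : t ≠ []) (h : t <+: s) : Substack t s := by
  induction s using List.reverseRecOn with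
  | nil => exact absurd (List.prefix_nil.1 h) ht
  | append_singleton s v ih =>
    rcases List.prefix_concat_iff.1 h with rfl | h
    · exact ⟨0, 0, rfl⟩
    · obtain ⟨n, m, hnm⟩ := ih h
      have hpop : pop2 (s ++ [v]) = some s :=
        pop2_eq_some_iff.2 ⟨h.ne_nil ht, v, rfl⟩
      exact ⟨n, m + 1, by rwa [iter, hpop]⟩

end Stacks

theorem push1_eq_some_iff {bot a : A} {s t : Stack2 A} :
    push1 bot a s = some t ↔
      a ≠ bot ∧ ∃ s₀ v, s = s₀ ++ [v] ∧ t = s₀ ++ [v ++ [Sum.inl a]] := by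
  rcases s.eq_nil_or_concat' with rfl | ⟨s₀, v, rfl⟩
  · simp [push1, top2]
  · simp [push1, top2, eq_comm]

theorem push2_eq_some_iff {bot a : A} {s t : Stack2 A} :
    push2 bot a s = some t ↔
      a ≠ bot ∧ ∃ s₀ v, s = s₀ ++ [v] ∧ t = s₀ ++ [v ++ [Sum.inr (a, s₀.length)]] := by
  rcases s.eq_nil_or_concat' with rfl | ⟨s₀, v, rfl⟩
  · simp [push2, top2]
  · simp [push2, top2, eq_comm]

/-- The possible effects of one operation, with everything forgotten except how it changes the
words of the stack: `cut` covers both `Pop₂` and a collapse along a level-2 link. -/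
inductive StepShape : Stack2 A → Stack2 A → Prop where
  | cut {s t : Stack2 A} (ht : t ≠ []) (h : t <+: s) : StepShape s t
  | clone (s : Stack2 A) (v : Word A) : StepShape (s ++ [v]) (s ++ [v] ++ [v])
  | push (s : Stack2 A) (v : Word A) (a : Letter A)
      (ha : ∀ x k, a = Sum.inr (x, k) → k = s.length) : StepShape (s ++ [v]) (s ++ [v ++ [a]])
  | pop (s : Stack2 A) (v : Word A) (a : Letter A) (hv : v ≠ []) :
      StepShape (s ++ [v ++ [a]]) (s ++ [v])

theorem StepShape.of_applyOp {bot : A} {op : Op A} {s t : Stack2 A}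
    (h : applyOp bot op s = some t) : StepShape s t := by
  cases op with
  | clone2 =>
    obtain ⟨s₀, v, rfl, rfl⟩ := clone2_eq_some_iff.1 h
    exact .clone s₀ v
  | pop1 =>
    obtain ⟨s₀, v, a, rfl, hv, rfl⟩ := pop1_eq_some_iff.1 h
    exact .pop s₀ v a hv
  | pop2 =>
    obtain ⟨ht, v, rfl⟩ := pop2_eq_some_iff.1 h
    exact .cut ht (List.prefix_append _ _)
  | collapse =>
    obtain ⟨s₀, v, a, rfl, ⟨-, hv, rfl⟩ | ⟨x, k, -, hk, rfl⟩⟩ := collapse_eq_some_iff.1 h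
    · exact .pop s₀ v a hv
    · exact .cut (by simp [List.take_eq_nil_iff, hk.ne']) (List.take_prefix _ _)
  | push1 a =>
    obtain ⟨-, s₀, v, rfl, rfl⟩ := push1_eq_some_iff.1 h
    exact .push s₀ v _ (by simp)
  | push2 a =>
    obtain ⟨-, s₀, v, rfl, rfl⟩ := push2_eq_some_iff.1 h
    exact .push s₀ v _ (by simp +contextual [eq_comm])

section Shapes

omit [DecidableEq A]

theorem StepShape.isPrefix_or_isPrefix {u s t : Stack2 A} (h : StepShape s t) (hu : u <+: s)
    (hne : u ≠ s) : (t ≠ [] ∧ t <+: u) ∨ (u <+: t ∧ u ≠ t) := by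
  have concat {s₀ : Stack2 A} (v : Word A) (h₀ : u <+: s₀) : u <+: s₀ ++ [v] ∧ u ≠ s₀ ++ [v] :=
    ⟨h₀.trans (List.prefix_append _ _), ne_concat_of_isPrefix h₀ v⟩
  cases h with
  | cut ht h =>
    by_cases htu : t <+: u
    · exact .inl ⟨ht, htu⟩
    · exact .inr ⟨(List.prefix_or_prefix_of_prefix h hu).resolve_left htu,
        fun he => htu (he ▸ List.prefix_rfl)⟩
  | clone s v => exact .inr (concat _ hu)
  | push s v a => exact .inr (concat _ ((List.prefix_concat_iff.1 hu).resolve_left hne))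
  | pop s v a => exact .inr (concat _ ((List.prefix_concat_iff.1 hu).resolve_left hne))

/-- Every word of `s` above the prefix `u` satisfies `P`; the first argument of `P` is the part
of the stack below that word. -/
def ForallAbove (u : Stack2 A) (P : Stack2 A → Word A → Prop) (s : Stack2 A) : Prop :=
  ∀ s₀ v, u <+: s₀ → s₀ ++ [v] <+: s → P s₀ v

theorem forallAbove_concat_iff {u s : Stack2 A} {v : Word A} {P : Stack2 A → Word A → Prop}
    (hu : u <+: s) : ForallAbove u P (s ++ [v]) ↔ ForallAbove u P s ∧ P s v := by
  refine ⟨fun h => ⟨fun s₀ v' h₀ hs => h s₀ v' h₀ (hs.trans (List.prefix_append _ _)),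
    h s v hu List.prefix_rfl⟩, fun ⟨hs, hv⟩ s₀ v' h₀ h => ?_⟩
  rcases List.prefix_concat_iff.1 h with h | h
  · obtain ⟨rfl, rfl⟩ : s₀ = s ∧ v' = v := by simpa using h
    exact hv
  · exact hs s₀ v' h₀ h

theorem ForallAbove.step {u s t : Stack2 A} {P : Stack2 A → Word A → Prop}
    (hs : ForallAbove u P s) (hst : StepShape s t) (hu : u <+: s) (hne : u ≠ s)
    (hclone : ∀ s v, u <+: s → P s v → P (s ++ [v]) v)
    (hpush : ∀ s v a, u <+: s → (∀ x k, a = Sum.inr (x, k) → k = s.length) → P s v →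
      P s (v ++ [a]))
    (hpop : ∀ s₀ v a, s = s₀ ++ [v ++ [a]] → v ≠ [] → t = s₀ ++ [v] → P s₀ (v ++ [a]) → P s₀ v) :
    ForallAbove u P t := by
  cases hst with
  | cut _ h => exact fun s₀ v h₀ hv => hs s₀ v h₀ (hv.trans h)
  | clone s v =>
    have hus := (List.prefix_concat_iff.1 hu).resolve_left hne
    exact (forallAbove_concat_iff hu).2
      ⟨hs, hclone s v hus ((forallAbove_concat_iff hus).1 hs).2⟩
  | push s v a ha =>
    have hus := (List.prefix_concat_iff.1 hu).resolve_left hne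
    obtain ⟨hs, hv⟩ := (forallAbove_concat_iff hus).1 hs
    exact (forallAbove_concat_iff hus).2 ⟨hs, hpush s v a hus ha hv⟩
  | pop s v a hv =>
    have hus := (List.prefix_concat_iff.1 hu).resolve_left hne
    obtain ⟨hs, hva⟩ := (forallAbove_concat_iff hus).1 hs
    exact (forallAbove_concat_iff hus).2 ⟨hs, hpop s v a rfl hv rfl hva⟩

end Shapes

theorem IsStack.ne_nil {bot : A} {s : Stack2 A} (hs : IsStack bot s) : s ≠ [] := by
  cases hs with
  | base => simp [bottom2]
  | step op _ h => cases StepShape.of_applyOp h <;> simp_all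

theorem IsStack.link_le {bot : A} {s : Stack2 A} (hs : IsStack bot s) :
    ForallAbove [] (fun s₀ v => ∀ x k, Sum.inr (x, k) ∈ v → k ≤ s₀.length) s := by
  induction hs with
  | base =>
    exact (forallAbove_concat_iff (s := []) List.nil_prefix).2 ⟨by simp [ForallAbove], by simp⟩
  | step op hs h ih =>
    refine ih.step (.of_applyOp h) List.nil_prefix hs.ne_nil.symm ?_ ?_ ?_
    · intro s v _ hv x k hk
      exact (hv x k hk).trans (by simp)
    · intro s v a _ ha hv x k hk
      rcases List.mem_append.1 hk with hk | hk
      · exact hv x k hk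
      · exact (ha x k (List.mem_singleton.1 hk).symm).le
    · exact fun s₀ v a _ _ _ hv x k hk => hv x k (List.mem_append_left _ hk)

/-! ### A description of returns by lengths -/

theorem Run.applyOp_stk {S : CPS Q A Γ} (ρ : Run S) {k : ℕ} (hk : k < ρ.len) :
    applyOp S.bot (ρ.op k) (ρ.stk k) = some (ρ.stk (k + 1)) := by
  obtain ⟨_, _, _, h⟩ := ρ.ok k hk
  exact h

section Returns

variable {S : CPS Q A Γ} {ρ : Run S} {i j k : ℕ}

theorem RetSeg.retShell (h : RetSeg ρ i j) : RetShell ρ i j := by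
  cases h <;> assumption

theorem RetShell.target_ne_nil (h : RetShell ρ i j) : ρ.stk j ≠ [] :=
  (pop2_eq_some_iff.1 h.2.2.1).1

theorem RetShell.target_isPrefix (h : RetShell ρ i j) (hik : i ≤ k) (hkj : k < j) :
    ρ.stk j <+: ρ.stk k ∧ ρ.stk j ≠ ρ.stk k := by
  obtain ⟨-, hj, hpop, hsub⟩ := h
  induction k, hik using Nat.le_induction with
  | base =>
    obtain ⟨-, z, hz⟩ := pop2_eq_some_iff.1 hpop
    rw [hz]
    exact ⟨List.prefix_append _ _, ne_concat_of_isPrefix List.prefix_rfl z⟩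
  | succ k hik ih =>
    obtain ⟨hu, hne⟩ := ih (by omega)
    have hstep : StepShape (ρ.stk k) (ρ.stk (k + 1)) := .of_applyOp (ρ.applyOp_stk (by omega))
    refine (hstep.isPrefix_or_isPrefix hu hne).resolve_left fun ⟨ht, htu⟩ => ?_
    exact hsub (k + 1) (by omega) hkj (.of_isPrefix ht htu)

theorem RetShell.of_le (h : RetShell ρ i j) (hik : i ≤ k) (hkj : k < j) {x : Word A}
    (hk : ρ.stk k = ρ.stk j ++ [x]) : RetShell ρ k j :=
  ⟨hkj, h.2.1, pop2_eq_some_iff.2 ⟨h.target_ne_nil, x, hk⟩,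
    fun l hkl hlj => h.2.2.2 l (hik.trans hkl) hlj⟩

theorem RetShell.collapse_target (h : RetShell ρ i j) (hop : ρ.op (j - 1) = Op.collapse) :
    ∃ s v x, ρ.stk (j - 1) = s ++ [v ++ [Sum.inr (x, (ρ.stk j).length)]] ∧ ρ.stk j <+: s := by
  have hij : i < j := h.1
  have hstep := ρ.applyOp_stk (k := j - 1) (by have := h.2.1; omega)
  rw [hop, Nat.sub_add_cancel (by omega)] at hstep
  obtain ⟨s, v, a, hs, hcases⟩ := collapse_eq_some_iff.1 hstep
  have hpre := h.target_isPrefix (k := j - 1) (by omega) (by omega)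
  rw [hs] at hpre
  have hus := (List.prefix_concat_iff.1 hpre.1).resolve_left hpre.2
  have hlen := hus.length_le
  rcases hcases with ⟨-, -, hj⟩ | ⟨x, k, rfl, -, hj⟩
  · exact absurd hj (ne_concat_of_isPrefix hus v)
  · have hk := congrArg List.length hj
    rw [hs, List.length_take, List.length_append, List.length_singleton] at hk
    obtain rfl : k = (ρ.stk j).length := by omega
    exact ⟨s, v, x, hs, hus⟩

/-- The invariant of a run over `u` which starts in `u ++ [z]` and never removes a letter of this
`z`: the lowest word above `u` extends `z`, and so does, above height `|z|`, every word up to any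
letter whose link points to `u`, since such a letter can only be pushed on the lowest word. -/
def ExtendsBase (u : Stack2 A) (z : Word A) (s₀ : Stack2 A) (v : Word A) : Prop :=
  (s₀ = u → z <+: v) ∧
    ∀ v' x, v' ++ [Sum.inr (x, u.length)] <+: v → z.length ≤ v'.length → z <+: v'

theorem RetShell.extendsBase (h : RetShell ρ i j) {z : Word A} (hi : ρ.stk i = ρ.stk j ++ [z])
    (hik : i ≤ k) (hkj : k < j)
    (hpop : ∀ l, i < l → l ≤ k → pop1 (ρ.stk i) ≠ some (ρ.stk l)) :
    ForallAbove (ρ.stk j) (ExtendsBase (ρ.stk j) z) (ρ.stk k) := by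
  set u := ρ.stk j
  induction k, hik using Nat.le_induction with
  | base =>
    rw [hi, forallAbove_concat_iff List.prefix_rfl]
    refine ⟨fun s₀ v hs₀ hv => absurd hs₀ fun hs₀ => ?_, fun _ => List.prefix_rfl, ?_⟩
    · simpa using (hv.trans hs₀).length_le
    · intro v' x hv' hz
      have := hv'.length_le
      simp only [List.length_append, List.length_singleton] at this
      omega
  | succ k hik ih =>
    have ih := ih (by omega) fun l hil hlk => hpop l hil (by omega)
    obtain ⟨hu, hne⟩ := h.target_isPrefix hik (by omega)
    have hlen : k < ρ.len := by have := h.2.1; omega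
    refine ih.step (.of_applyOp (ρ.applyOp_stk hlen)) hu hne ?_ ?_ ?_
    · exact fun s v hus hv => ⟨fun hs => absurd hs.symm (ne_concat_of_isPrefix hus v), hv.2⟩
    · intro s v a hus ha hv
      refine ⟨fun hs => (hv.1 hs).trans (List.prefix_append _ _), fun v' x hv' hz => ?_⟩
      rcases List.prefix_concat_iff.1 hv' with heq | hv'
      · obtain ⟨rfl, rfl⟩ : v' = v ∧ Sum.inr (x, u.length) = a := by
          simpa using heq
        exact hv.1 (hus.eq_of_length (ha x _ rfl)).symm
      · exact hv.2 v' x hv' hz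
    · rintro s₀ v a - hv hk ⟨hbase, htop⟩
      refine ⟨?_, fun v' x hv' => htop v' x (hv'.trans (List.prefix_append _ _))⟩
      rintro rfl
      refine (List.prefix_concat_iff.1 (hbase rfl)).resolve_left ?_
      rintro rfl
      exact hpop (k + 1) (by omega) le_rfl (pop1_eq_some_iff.2 ⟨u, v, a, hi, hv, hk⟩)

/-- The length criterion for a return ending in a collapse: before the collapse, the run visits
the width of its first stack with a topmost word shorter than the one that is collapsed. -/
def VisitsShorter (ρ : Run S) (i j : ℕ) : Prop :=
  ∃ k x s v, i ≤ k ∧ k < j ∧ ρ.stk k = ρ.stk j ++ [x] ∧ ρ.stk (j - 1) = s ++ [v] ∧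
    x.length < v.length

theorem RetSeg.of_never_pop1 (h : RetShell ρ i j) (hop : ρ.op (j - 1) = Op.collapse)
    (hpop : ∀ l, i < l → l < j → pop1 (ρ.stk i) ≠ some (ρ.stk l)) {s : Stack2 A} {v z : Word A}
    (hi : ρ.stk i = ρ.stk j ++ [z]) (hs : ρ.stk (j - 1) = s ++ [v]) (hzv : z.length < v.length) :
    RetSeg ρ i j := by
  obtain ⟨s', v', y, hs', hus⟩ := h.collapse_target hop
  obtain ⟨rfl, rfl⟩ : s = s' ∧ v = v' ++ [Sum.inr (y, (ρ.stk j).length)] := by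
    simpa using hs.symm.trans hs'
  have hij : i < j := h.1
  have hzv' : z <+: v' :=
    (h.extendsBase hi (k := j - 1) (by omega) (by omega)
      (fun l hil hlj => hpop l hil (by omega)) _ _ hus (by rw [hs])).2 v' y List.prefix_rfl
      (by simpa [Nat.lt_succ_iff] using hzv)
  refine .collapse h hop ⟨z, v' ++ [Sum.inr (y, (ρ.stk j).length)], ?_, ?_,
    hzv'.trans (List.prefix_append _ _), ne_concat_of_isPrefix hzv' _⟩
  · simp [hi, top2]
  · simp [hs, top2]

theorem RetSeg.of_visitsShorter (h : RetShell ρ i j) (hop : ρ.op (j - 1) = Op.collapse)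
    (hshort : VisitsShorter ρ i j) : RetSeg ρ i j := by
  obtain ⟨-, z, hi⟩ := pop2_eq_some_iff.1 h.2.2.1
  induction hn : z.length using Nat.strong_induction_on generalizing i z with
  | _ n ih =>
  obtain ⟨k, x, s, v, hik, hkj, hk, hs, hxv⟩ := hshort
  have of_pop {l : ℕ} (hil : i < l) (hlj : l < j) (hpop : pop1 (ρ.stk i) = some (ρ.stk l))
      (hshort : z.length ≤ v.length ∨ l ≤ k) : RetSeg ρ i j := by
    obtain ⟨s₀, y, a, hi', -, hl⟩ := pop1_eq_some_iff.1 hpop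
    obtain ⟨rfl, rfl⟩ : ρ.stk j = s₀ ∧ z = y ++ [a] := by
      simpa using hi.symm.trans hi'
    simp only [List.length_append, List.length_singleton] at hn hshort
    refine .sub h hil hlj.le hpop
      (ih y.length (by omega) (h.of_le hil.le hlj hl) ?_ y hl rfl)
    rcases hshort with hyv | hlk
    · exact ⟨l, y, s, v, le_rfl, hlj, hl, hs, by omega⟩
    · exact ⟨k, x, s, v, hlk, hkj, hk, hs, hxv⟩
  by_cases! hbefore : ∃ l, i < l ∧ l ≤ k ∧ pop1 (ρ.stk i) = some (ρ.stk l)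
  · obtain ⟨l, hil, hlk, hpop⟩ := hbefore
    exact of_pop hil (by omega) hpop (.inr hlk)
  have hzx : z <+: x :=
    (h.extendsBase hi hik hkj hbefore _ x List.prefix_rfl
      (by rw [hk])).1 rfl
  have hzv : z.length < v.length := hzx.length_le.trans_lt hxv
  by_cases! hvisit : ∃ l, i < l ∧ l < j ∧ pop1 (ρ.stk i) = some (ρ.stk l)
  · obtain ⟨l, hil, hlj, hpop⟩ := hvisit
    exact of_pop hil hlj hpop (.inl hzv.le)
  · exact .of_never_pop1 h hop hvisit hi hs hzv

theorem retSeg_iff : RetSeg ρ i j ↔ RetShell ρ i j ∧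
    (ρ.op (j - 1) = Op.pop2 ∨ ρ.op (j - 1) = Op.collapse ∧ VisitsShorter ρ i j) := by
  refine ⟨fun h => ⟨h.retShell, ?_⟩, ?_⟩
  · induction h with
    | pop2 _ hop => exact .inl hop
    | @collapse i j h hop hpre =>
      obtain ⟨w, w', hw, hw', hpre, hne⟩ := hpre
      obtain ⟨-, z, hi⟩ := pop2_eq_some_iff.1 h.2.2.1
      obtain rfl : z = w := by simpa [hi, top2] using hw
      obtain ⟨s, hs⟩ := List.getLast?_eq_some_iff.1 hw'
      exact .inr ⟨hop, i, z, s, w', le_rfl, h.1, hi, hs,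
        hpre.length_le.lt_of_ne fun he => hne (hpre.eq_of_length he)⟩
    | sub _ hik _ _ _ ih =>
      refine ih.imp_right fun ⟨hop, k', x, s, v, hkk', hshort⟩ => ?_
      exact ⟨hop, k', x, s, v, by omega, hshort⟩
  · rintro ⟨h, hop | ⟨hop, hshort⟩⟩
    · exact .pop2 h hop
    · exact .of_visitsShorter h hop hshort

end Returns

section Similarity

omit [DecidableEq A]

/-! ### Stacks which agree above their targets -/

/-- Letters which behave alike on top of stacks with `n` and `n'` words: their level-2 links keep
the same number of words above the lowest `n` and `n'` ones. -/
inductive ShiftedLink (n n' : ℕ) : Letter A → Letter A → Prop where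
  | level1 (x : A) : ShiftedLink n n' (Sum.inl x) (Sum.inl x)
  | level2 (x : A) (j : ℕ) : ShiftedLink n n' (Sum.inr (x, n + j)) (Sum.inr (x, n' + j))

/-- Letters with the same symbol whose level-2 links lead into the lowest `n` and `n'` words,
where they may differ. -/
inductive LowLink (n n' : ℕ) : Letter A → Letter A → Prop where
  | mk (x : A) {k k' : ℕ} (hk : k ≤ n) (hk' : k' ≤ n') :
      LowLink n n' (Sum.inr (x, k)) (Sum.inr (x, k'))

/-- Similarity of words above stacks with `n` and `n'` words: low links are tolerated among the
first `m` letters only. -/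
inductive SimWord (n n' m : ℕ) : Word A → Word A → Prop where
  | nil : SimWord n n' m [] []
  | snoc {v v' : Word A} {a a' : Letter A} (h : SimWord n n' m v v')
      (ha : ShiftedLink n n' a a' ∨ v.length < m ∧ LowLink n n' a a') :
      SimWord n n' m (v ++ [a]) (v' ++ [a'])

/-- Similarity of stacks above the prefixes `u` and `u'`, word by word. -/
inductive SimStack (u u' : Stack2 A) (m : ℕ) : Stack2 A → Stack2 A → Prop where
  | base : SimStack u u' m u u'
  | snoc {s t : Stack2 A} {v v' : Word A} (h : SimStack u u' m s t)
      (hv : SimWord u.length u'.length m v v') : SimStack u u' m (s ++ [v]) (t ++ [v'])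

section Words

variable {n n' m m' : ℕ} {v v' : Word A} {a a' : Letter A}

theorem ShiftedLink.symm (h : ShiftedLink n n' a a') : ShiftedLink n' n a' a := by
  cases h <;> constructor

theorem LowLink.symm (h : LowLink n n' a a') : LowLink n' n a' a := by
  cases h with
  | mk x hk hk' => exact .mk x hk' hk

theorem ShiftedLink.symOf_eq (h : ShiftedLink n n' a a') : symOf a = symOf a' := by
  cases h <;> rfl

theorem LowLink.symOf_eq (h : LowLink n n' a a') : symOf a = symOf a' := by
  cases h; rfl

theorem SimWord.length_eq (h : SimWord n n' m v v') : v.length = v'.length := by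
  induction h with
  | nil => rfl
  | snoc _ _ ih => simp [ih]

theorem SimWord.symm (h : SimWord n n' m v v') : SimWord n' n m v' v := by
  induction h with
  | nil => exact .nil
  | snoc h ha ih => exact ih.snoc (ha.imp (·.symm) fun ⟨hm, hl⟩ => ⟨h.length_eq ▸ hm, hl.symm⟩)

theorem SimWord.of_length_le (h : SimWord n n' m v v') (hv : v.length ≤ m') :
    SimWord n n' m' v v' := by
  induction h with
  | nil => exact .nil
  | snoc _ ha ih =>
    rw [List.length_append, List.length_singleton] at hv
    exact (ih (by omega)).snoc (ha.imp_right fun ⟨_, hl⟩ => ⟨by omega, hl⟩)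

theorem SimWord.exists_of_concat {z : Word A} (h : SimWord n n' m (v ++ [a]) z) :
    ∃ v' a', z = v' ++ [a'] ∧ SimWord n n' m v v' ∧
      (ShiftedLink n n' a a' ∨ v.length < m ∧ LowLink n n' a a') := by
  generalize hw : v ++ [a] = w at h
  cases h with
  | nil => simp at hw
  | @snoc y y' b b' h hb =>
    obtain ⟨rfl, rfl⟩ : v = y ∧ a = b := by simpa using hw
    exact ⟨y', b', rfl, h, hb⟩

theorem simWord_down0 (hv : ∀ x k, Sum.inr (x, k) ∈ v → k ≤ n) :
    SimWord n n' v.length v (down0 v) := by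
  induction v using List.reverseRecOn with
  | nil => exact .nil
  | append_singleton v a ih =>
    have ih := ih fun x k hk => hv x k (List.mem_append_left _ hk)
    rw [down0, List.map_append, List.map_singleton]
    refine (ih.of_length_le (by simp)).snoc ?_
    rcases a with x | ⟨x, k⟩
    · exact .inl (.level1 x)
    · exact .inr ⟨by simp, .mk x (hv x k (by simp)) n'.zero_le⟩

end Words

section Stacks

variable {u u' s t : Stack2 A} {m : ℕ}

theorem SimStack.exists_append (h : SimStack u u' m s t) :
    ∃ r r', s = u ++ r ∧ t = u' ++ r' ∧ r.length = r'.length := by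
  induction h with
  | base => exact ⟨[], [], by simp⟩
  | @snoc _ _ v v' _ _ ih =>
    obtain ⟨r, r', rfl, rfl, hr⟩ := ih
    exact ⟨r ++ [v], r' ++ [v'], by simp [hr]⟩

theorem SimStack.eq_of_base (h : SimStack u u' m u t) : t = u' := by
  obtain ⟨r, r', hr, rfl, hlen⟩ := h.exists_append
  obtain rfl : r = [] := by simpa using hr
  simpa [eq_comm] using hlen

theorem SimStack.exists_of_concat {v : Word A} (h : SimStack u u' m (s ++ [v]) t)
    (hne : u ≠ s ++ [v]) : ∃ t₀ v', t = t₀ ++ [v'] ∧ SimStack u u' m s t₀ ∧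
      SimWord u.length u'.length m v v' := by
  generalize hr : s ++ [v] = r at h hne
  cases h with
  | base => exact absurd rfl hne
  | @snoc s₁ t₁ v₁ v₁' h hv =>
    obtain ⟨rfl, rfl⟩ : s = s₁ ∧ v = v₁ := by simpa using hr
    exact ⟨t₁, v₁', rfl, h, hv⟩

theorem SimStack.exists_of_base_concat {x : Word A} (h : SimStack u u' m (u ++ [x]) t) :
    ∃ x', t = u' ++ [x'] ∧ SimWord u.length u'.length m x x' := by
  obtain ⟨t₀, x', rfl, h, hx⟩ := h.exists_of_concat (ne_concat_of_isPrefix List.prefix_rfl x)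
  exact ⟨x', by rw [h.eq_of_base], hx⟩

theorem SimStack.exists_of_concat_concat {v : Word A} {a : Letter A}
    (h : SimStack u u' m (s ++ [v ++ [a]]) t) (hne : u ≠ s ++ [v ++ [a]]) :
    ∃ t₀ v' a', t = t₀ ++ [v' ++ [a']] ∧ SimStack u u' m (s ++ [v]) (t₀ ++ [v']) ∧
      (v ≠ [] → v' ≠ []) := by
  obtain ⟨t₀, z, rfl, hs, hz⟩ := h.exists_of_concat hne
  obtain ⟨v', a', rfl, hv, -⟩ := hz.exists_of_concat
  refine ⟨t₀, v', a', rfl, hs.snoc hv, ?_⟩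
  rw [← List.length_pos_iff, ← List.length_pos_iff, hv.length_eq]
  exact id

theorem SimStack.symS_eq (h : SimStack u u' m s t) (hne : u ≠ s) : symS s = symS t := by
  cases h with
  | base => exact absurd rfl hne
  | snoc _ hv =>
    cases hv with
    | nil => simp [symS, top1]
    | snoc _ ha => simpa [symS, top1] using ha.elim (·.symOf_eq) (·.2.symOf_eq)

theorem SimStack.top1_link (h : SimStack u u' m s t) (hne : u ≠ s) {a a' : Letter A}
    (ha : top1 s = some a) (ha' : top1 t = some a') :
    ShiftedLink u.length u'.length a a' ∨
      (∃ s₀ v, s = s₀ ++ [v] ∧ v.length ≤ m) ∧ LowLink u.length u'.length a a' := by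
  cases h with
  | base => exact absurd rfl hne
  | @snoc s₀ _ v _ _ hv =>
    cases hv with
    | nil => simp [top1] at ha
    | snoc _ hb =>
      simp only [top1, List.getLast?_concat, Option.bind_some, Option.some.injEq] at ha ha'
      subst ha ha'
      exact hb.imp_right fun ⟨hm, hl⟩ => ⟨⟨s₀, _, rfl, by simpa using hm⟩, hl⟩

theorem SimStack.take (h : SimStack u u' m s t) (j : ℕ) :
    SimStack u u' m (s.take (u.length + j)) (t.take (u'.length + j)) := by
  induction h with
  | base => simpa only [List.take_of_length_le (Nat.le_add_right _ _)] using .base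
  | @snoc s t v v' h hv ih =>
    obtain ⟨r, r', hs, ht, hr⟩ := h.exists_append
    have hs : s.length = u.length + r.length := by rw [hs, List.length_append]
    have ht : t.length = u'.length + r'.length := by rw [ht, List.length_append]
    by_cases hj : j ≤ r.length
    · rwa [List.take_append_of_le_length (by omega), List.take_append_of_le_length (by omega)]
    · rw [List.take_of_length_le (by grind), List.take_of_length_le (by grind)]
      exact h.snoc hv

theorem SimStack.exists_collapse {s' : Stack2 A} (h : SimStack u u' m s t) (hne : u ≠ s)
    (hu' : u' ≠ [])
    (hlink : ∀ a a', top1 s = some a → top1 t = some a' → ShiftedLink u.length u'.length a a')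
    (hs' : collapse s = some s') : ∃ t', collapse t = some t' ∧ SimStack u u' m s' t' := by
  obtain ⟨s₀, v, a, rfl, hcases⟩ := collapse_eq_some_iff.1 hs'
  obtain ⟨t₀, v', a', rfl, hpop, hv⟩ := h.exists_of_concat_concat hne
  rcases hlink a a' (by simp [top1]) (by simp [top1]) with x | ⟨x, j⟩ <;>
    rcases hcases with ⟨⟨y, hy⟩, hnil, rfl⟩ | ⟨y, k, hy, -, rfl⟩ <;> cases hy
  · exact ⟨t₀ ++ [v'], collapse_eq_some_iff.2 ⟨t₀, v', _, rfl, .inl ⟨⟨x, rfl⟩, hv hnil, rfl⟩⟩, hpop⟩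
  · have hpos : 0 < u'.length + j := by have := List.length_pos_iff.2 hu'; omega
    exact ⟨_, collapse_eq_some_iff.2 ⟨t₀, v', _, rfl, .inr ⟨x, _, rfl, hpos, rfl⟩⟩, h.take j⟩

end Stacks

end Similarity

/-! ### Simulation of returns -/

theorem SimStack.exists_applyOp {u u' s t s' : Stack2 A} {m : ℕ} {bot : A} {op : Op A}
    (h : SimStack u u' m s t) (hne : u ≠ s) (hu' : u' ≠ [])
    (hlink : op = Op.collapse → ∀ a a', top1 s = some a → top1 t = some a' →
      ShiftedLink u.length u'.length a a')
    (hop : applyOp bot op s = some s') :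
    ∃ t', applyOp bot op t = some t' ∧ SimStack u u' m s' t' := by
  cases op with
  | clone2 =>
    obtain ⟨s₀, v, rfl, rfl⟩ := clone2_eq_some_iff.1 hop
    obtain ⟨t₀, v', rfl, -, hv⟩ := h.exists_of_concat hne
    exact ⟨_, clone2_eq_some_iff.2 ⟨t₀, v', rfl, rfl⟩, h.snoc hv⟩
  | pop1 =>
    obtain ⟨s₀, v, a, rfl, hnil, rfl⟩ := pop1_eq_some_iff.1 hop
    obtain ⟨t₀, v', a', rfl, hs, hv⟩ := h.exists_of_concat_concat hne
    exact ⟨_, pop1_eq_some_iff.2 ⟨t₀, v', a', rfl, hv hnil, rfl⟩, hs⟩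
  | pop2 =>
    obtain ⟨-, v, rfl⟩ := pop2_eq_some_iff.1 hop
    obtain ⟨t₀, v', rfl, hs, -⟩ := h.exists_of_concat hne
    obtain ⟨r, r', -, rfl, -⟩ := hs.exists_append
    exact ⟨_, pop2_eq_some_iff.2 ⟨by simp [hu'], v', rfl⟩, hs⟩
  | collapse => exact h.exists_collapse hne hu' (hlink rfl) hop
  | push1 x =>
    obtain ⟨hx, s₀, v, rfl, rfl⟩ := push1_eq_some_iff.1 hop
    obtain ⟨t₀, v', rfl, hs, hv⟩ := h.exists_of_concat hne
    exact ⟨_, push1_eq_some_iff.2 ⟨hx, t₀, v', rfl, rfl⟩, hs.snoc (hv.snoc (.inl (.level1 x)))⟩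
  | push2 x =>
    obtain ⟨hx, s₀, v, rfl, rfl⟩ := push2_eq_some_iff.1 hop
    obtain ⟨t₀, v', rfl, hs, hv⟩ := h.exists_of_concat hne
    refine ⟨_, push2_eq_some_iff.2 ⟨hx, t₀, v', rfl, rfl⟩, hs.snoc (hv.snoc (.inl ?_))⟩
    obtain ⟨r, r', rfl, rfl, hr⟩ := hs.exists_append
    simpa [hr] using .level2 x r'.length

theorem Run.exists_simulation {S : CPS Q A Γ} (ρ : Run S) {R : ℕ → Stack2 A → Prop}
    {t₀ : Stack2 A} (h0 : R 0 t₀)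
    (hsym : ∀ k t, k < ρ.len → R k t → symS (ρ.stk k) = symS t)
    (hstep : ∀ k t, k < ρ.len → R k t → ∃ t', applyOp S.bot (ρ.op k) t = some t' ∧ R (k + 1) t') :
    ∃ ρ' : Run S, ρ'.len = ρ.len ∧ ρ'.op = ρ.op ∧ (∀ k, (ρ'.cfg k).1 = (ρ.cfg k).1) ∧
      ρ'.stk 0 = t₀ ∧ ∀ k ≤ ρ.len, R k (ρ'.stk k) := by
  choose! next hnext hR using hstep
  let τ : ℕ → Stack2 A := Nat.rec t₀ next
  have hτ (k : ℕ) (hk : k ≤ ρ.len) : R k (τ k) := by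
    induction k with
    | zero => exact h0
    | succ k ih => exact hR k (τ k) hk (ih (by omega))
  refine ⟨⟨ρ.len, fun k => ((ρ.cfg k).1, τ k), ρ.lab, ρ.op, fun k hk => ?_⟩,
    rfl, rfl, fun _ => rfl, rfl, hτ⟩
  obtain ⟨σ, hσ, hΔ, -⟩ := ρ.ok k hk
  exact ⟨σ, (hsym k _ hk (hτ k hk.le)).symm.trans hσ, hΔ, hnext k _ hk (hτ k hk.le)⟩

/-- The stack `t` simulates the `k`-th stack of the run `ρ` above `u'` instead of the target
`ρ.stk ρ.len`. Low links are tolerated up to the lowest height at which the run has visited the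
width of its first stack: no letter beyond that height stems from the initial topmost word. -/
def SimulatesAt {S : CPS Q A Γ} (ρ : Run S) (u' : Stack2 A) (k : ℕ) (t : Stack2 A) : Prop :=
  ∀ i ≤ k, ∀ x, ρ.stk i = ρ.stk ρ.len ++ [x] →
    SimStack (ρ.stk ρ.len) u' x.length (ρ.stk k) t

section Transfer

variable {S : CPS Q A Γ} {ρ ρ' : Run S} {u' t : Stack2 A} {k : ℕ} {w w' : Word A}

theorem SimulatesAt.shiftedLink (h : SimulatesAt ρ u' k t) (hret : RetSeg ρ 0 ρ.len)
    (hk : k < ρ.len) (hop : ρ.op k = Op.collapse) {a a' : Letter A} (ha : top1 (ρ.stk k) = some a)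
    (ha' : top1 t = some a') : ShiftedLink (ρ.stk ρ.len).length u'.length a a' := by
  obtain ⟨hshell, hlast⟩ := retSeg_iff.1 hret
  have hne := (hshell.target_isPrefix k.zero_le hk).2
  rcases Nat.lt_or_ge (k + 1) ρ.len with hk1 | hk1
  · obtain ⟨-, w, hw⟩ := pop2_eq_some_iff.1 hshell.2.2.1
    refine ((h 0 k.zero_le w hw).top1_link hne ha ha').resolve_right ?_
    rintro ⟨-, ⟨x, hl, -⟩⟩
    have hstep := ρ.applyOp_stk hk
    rw [hop] at hstep
    obtain ⟨s, v, b, hs, hcases⟩ := collapse_eq_some_iff.1 hstep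
    obtain rfl : b = _ := by simpa [hs, top1] using ha
    obtain ⟨⟨y, hy⟩, -⟩ | ⟨y, l, hy, -, htake⟩ := hcases
    · cases hy
    · cases hy
      obtain ⟨hu, hne'⟩ := hshell.target_isPrefix (k + 1).zero_le hk1
      refine hne' (hu.eq_of_length_le ?_)
      rw [htake]
      exact (List.length_take_le _ _).trans hl
  · obtain rfl : k = ρ.len - 1 := by omega
    obtain ⟨i, x, s, v, -, hi, hx, hs, hxv⟩ : VisitsShorter ρ 0 ρ.len := by simpa [hop] using hlast
    refine ((h i (by omega) x hx).top1_link hne ha ha').resolve_right ?_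
    rintro ⟨⟨s₀, y, hs₀, hy⟩, -⟩
    obtain ⟨-, rfl⟩ : s = s₀ ∧ v = y := by simpa using hs.symm.trans hs₀
    omega

theorem SimulatesAt.step (h : SimulatesAt ρ u' k t) (hret : RetSeg ρ 0 ρ.len) (hu' : u' ≠ [])
    (hk : k < ρ.len) :
    ∃ t', applyOp S.bot (ρ.op k) t = some t' ∧ SimulatesAt ρ u' (k + 1) t' := by
  obtain ⟨-, w, hw⟩ := pop2_eq_some_iff.1 hret.retShell.2.2.1
  have hne := (hret.retShell.target_isPrefix k.zero_le hk).2
  have hsim {m : ℕ} (hm : SimStack (ρ.stk ρ.len) u' m (ρ.stk k) t) :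
      ∃ t', applyOp S.bot (ρ.op k) t = some t' ∧
        SimStack (ρ.stk ρ.len) u' m (ρ.stk (k + 1)) t' :=
    hm.exists_applyOp hne hu' (fun hop _ _ => h.shiftedLink hret hk hop) (ρ.applyOp_stk hk)
  obtain ⟨t', ht', hwt'⟩ := hsim (h 0 k.zero_le w hw)
  refine ⟨t', ht', fun i hi x hx => ?_⟩
  rcases Nat.le_succ_iff.1 hi with hi | rfl
  · obtain ⟨t'', ht'', hxt''⟩ := hsim (h i hi x hx)
    rwa [Option.some.inj (ht'.symm.trans ht'')]
  · rw [hx] at hwt' ⊢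
    obtain ⟨x', rfl, hxx'⟩ := hwt'.exists_of_base_concat
    exact .snoc .base (hxx'.of_length_le le_rfl)

theorem RetSeg.of_simulatesAt (hret : RetSeg ρ 0 ρ.len) (hu' : u' ≠ []) (hlen : ρ'.len = ρ.len)
    (hop : ρ'.op = ρ.op) (hsim : ∀ k ≤ ρ.len, SimulatesAt ρ u' k (ρ'.stk k)) :
    RetSeg ρ' 0 ρ'.len ∧ ρ'.stk ρ'.len = u' := by
  obtain ⟨hshell, hlast⟩ := retSeg_iff.1 hret
  have hpos : 0 < ρ.len := hshell.1
  obtain ⟨-, w, hw⟩ := pop2_eq_some_iff.1 hshell.2.2.1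
  have hsim' {k : ℕ} (hk : k ≤ ρ.len) := hsim k hk 0 k.zero_le w hw
  have htarget : ρ'.stk ρ.len = u' := (hsim' le_rfl).eq_of_base
  have hvisit {k : ℕ} (hk : k ≤ ρ.len) {x : Word A} (hx : ρ.stk k = ρ.stk ρ.len ++ [x]) :
      ∃ x', ρ'.stk k = u' ++ [x'] ∧ x.length = x'.length := by
    obtain ⟨x', hx', hxx'⟩ := SimStack.exists_of_base_concat (hx ▸ hsim' hk)
    exact ⟨x', hx', hxx'.length_eq⟩
  rw [retSeg_iff, hlen, hop, htarget]
  refine ⟨⟨⟨hpos, hlen.ge, ?_, fun k _ hk hsub => ?_⟩, hlast.imp_right ?_⟩, rfl⟩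
  · obtain ⟨w', hw', -⟩ := hvisit ρ.len.zero_le hw
    exact pop2_eq_some_iff.2 ⟨by rwa [htarget], w', by rw [hw', htarget]⟩
  · have hne := (hshell.target_isPrefix k.zero_le hk).2
    obtain ⟨r, r', hr, hr', hrr'⟩ := (hsim' hk.le).exists_append
    have hr0 : r ≠ [] := by rintro rfl; exact hne (by simpa using hr.symm)
    have hle := hsub.length_le
    rw [htarget, hr', List.length_append] at hle
    exact hr0 (List.length_eq_zero_iff.1 (by omega))
  · rintro ⟨hcol, i, x, s, v, -, hi, hx, hs, hxv⟩
    obtain ⟨x', hx', hxlen⟩ := hvisit hi.le hx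
    have hne := (hshell.target_isPrefix (k := ρ.len - 1) (by omega) (by omega)).2
    have hsimlast := hsim' (k := ρ.len - 1) (by omega)
    rw [hs] at hne hsimlast
    obtain ⟨s', v', hs', -, hv⟩ := hsimlast.exists_of_concat hne
    exact ⟨hcol, i, x', s', v', i.zero_le, hi, by rw [hx', htarget], hs', by
      rw [← hxlen, ← hv.length_eq]; exact hxv⟩

/-- There is a return from the configuration `c` to the configuration `c'`. -/
def Returns (S : CPS Q A Γ) (c c' : Q × Stack2 A) : Prop :=
  ∃ ρ : Run S, ρ.cfg 0 = c ∧ ρ.cfg ρ.len = c' ∧ RetSeg ρ 0 ρ.len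

theorem Returns.of_simWord {u : Stack2 A} {q q' : Q} (h : Returns S (q, u ++ [w]) (q', u))
    (hu' : u' ≠ []) (hw : SimWord u.length u'.length w.length w w') :
    Returns S (q, u' ++ [w']) (q', u') := by
  obtain ⟨ρ, h0, hlen, hret⟩ := h
  obtain rfl : ρ.stk ρ.len = u := congrArg Prod.snd hlen
  have hstk0 : ρ.stk 0 = ρ.stk ρ.len ++ [w] := congrArg Prod.snd h0
  have hstart : SimulatesAt ρ u' 0 (u' ++ [w']) := by
    intro i hi x hx
    obtain rfl := Nat.le_zero.1 hi
    rw [hstk0] at hx ⊢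
    obtain rfl : w = x := by simpa using hx
    exact .snoc .base hw
  obtain ⟨ρ', hlen', hop, hstate, h0', hsim⟩ := ρ.exists_simulation hstart
    (fun k t hk ht => (ht 0 k.zero_le w hstk0).symS_eq
      (hret.retShell.target_isPrefix k.zero_le hk).2)
    (fun k t hk ht => ht.step hret hu' hk)
  obtain ⟨hret', htarget⟩ := hret.of_simulatesAt hu' hlen' hop hsim
  refine ⟨ρ', Prod.ext ?_ h0', Prod.ext ?_ htarget, hret'⟩
  · rw [hstate, h0]
  · rw [hlen', hstate, hlen]

end Transfer

/-- For `|s| ≥ 2`, there is a return from `(q,s)` to `(q',Pop₂(s))`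
iff `(q,q') ∈ ExRet(TOP₂(s))`. -/
theorem return_iff_exRet
    {Q A Γ : Type} [DecidableEq A] (S : CPS Q A Γ)
    (s : Stack2 A) (hs : IsStack S.bot s) (h2 : 2 ≤ s.length) (q q' : Q) :
    (∃ ρ : Run S, ρ.cfg 0 = (q, s) ∧ ρ.cfg ρ.len = (q', s.dropLast) ∧
      RetSeg ρ 0 ρ.len) ↔
    ∃ w, top2 s = some w ∧ (q, q') ∈ ExRet S w := by
  obtain ⟨u, w, rfl⟩ := s.eq_nil_or_concat'.resolve_left hs.ne_nil
  have hu : u ≠ [] := by rintro rfl; simp at h2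
  have hlink : ∀ x k, Sum.inr (x, k) ∈ w → k ≤ u.length :=
    hs.link_le u w List.nil_prefix List.prefix_rfl
  have hsim : SimWord u.length [down0 w].length w.length w (down0 w) := simWord_down0 hlink
  have hlen : (down0 w).length = w.length := hsim.length_eq.symm
  have htop : top2 (u ++ [w]) = some w := List.getLast?_concat
  rw [List.dropLast_concat]
  constructor
  · exact fun h => ⟨w, htop, Returns.of_simWord h (List.cons_ne_nil _ _) hsim⟩
  · rintro ⟨v, hv, h⟩
    obtain rfl : w = v := Option.some.inj (htop.symm.trans hv)
    exact Returns.of_simWord (u := [down0 w]) h hu (hlen ▸ hsim.symm)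

end CPG
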